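/- Let m ≥ 1, let p_-, q_-, p_+, q_+ ∈ ℝ with -1 < p_± ≤ q_± < 1, set a_± = p_± q_±, b_± = p_± + q_±, let p_l(ξ) := U_l(cos ξ) - b_- U_{l-1}(cos ξ) + a_- U_{l-2}(cos ξ), let ξ_l̂^{(m)} (0 ≤ l̂ ≤ m) be the unique real solution of 2mξ + v_{p_-}(ξ) + v_{q_-}(ξ) + v_{p_+}(ξ) + v_{q_+}(ξ) = 2π(l̂+1), Δ_l^{(m)} := (1-a_- δ_{l,0})^{-1}(1-a_+ δ_{l,m})^{-1}, c(ξ) := (1-p_- e^{-iξ})(1-q_- e^{-iξ})/(1-e^{-2iξ}), H^{(m)}(ξ) := 2m + ∑_{q ∈ {p_-,q_-,p_+,q_+}} (1-q^2)/(1-2q cos ξ + q^2), and Δ̂_l̂^{(m)} := 1/( c(ξ_l̂^{(m)}) c(-ξ_l̂^{(m)}) H^{(m)}(ξ_l̂^{(m)}) ). Then for all 0 ≤ l, k ≤ m: ∑_{l̂=0}^{m} p_l(ξ_l̂^{(m)}) p_k(ξ_l̂^{(m)}) Δ̂_l̂^{(m)} equals 0 if k ≠ l and equals 1/Δ_l^{(m)}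 if k = l. -/

import Mathlib

/-!
The claim is discrete orthogonality for a finite Jacobi matrix, obtained from its dual.

Each `v_q` is strictly increasing with `v_q 0 = 0` and `v_q π = π` (closed form `v_eq`), so the nodes
`ξ_j` lie in `(0, π)` and have distinct cosines. Since `e^{i v_q(ξ)} = (z - q) / (1 - q z)` for
`z = e^{iξ}`, the equation for `ξ_j` becomes the algebraic equation `bethe`, which is equivalent to
the right boundary condition `p_{m+1} - b₊ p_m + a₊ p_{m-1} = 0` (last part of `diag`); the left
boundary condition is built into the definition of `p_l`.

The dual relation is `∑_l Δ_l p_l(ξ_i) p_l(ξ_j) = δ_{ij} c(ξ_i) c(-ξ_i) H(ξ_i)`. For `i ≠ j` it is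
the Christoffel–Darboux formula `christoffel_darboux`, whose two boundary terms are cancelled by the
end weights `Δ_0` and `Δ_m`. For `i = j` the plane wave form
`p_l(ξ) = c(ξ) z^l + c(-ξ) z^{-l}` (`bs_wave`) turns the sum into geometric series; once `z^{2m}` is
eliminated by `bethe`, the result splits into rational identities for the left end (`diag_left`) and
the right end (`diag_right`). The dual relation says that two square matrices satisfy `A * B = 1`,
and `B * A = 1` is the assertion.
-/

/-- The function `v_q(ξ) = ∫_0^ξ (1-q²)/(1-2q cos x + q²) dx`. -/
noncomputable def v (q ξ : ℝ) : ℝ :=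
  ∫ x in (0:ℝ)..ξ, (1 - q^2) / (1 - 2*q*Real.cos x + q^2)

/-- The Bernstein–Szegő polynomial `p_l(ξ) = U_l(cos ξ) - b₋ U_{l-1}(cos ξ) + a₋ U_{l-2}(cos ξ)`,
with the Chebyshev polynomials of the second kind indexed by `ℤ`. -/
noncomputable def bs (am bm : ℝ) (l : ℤ) (ξ : ℝ) : ℝ :=
  (Polynomial.Chebyshev.U ℝ l).eval (Real.cos ξ)
    - bm * (Polynomial.Chebyshev.U ℝ (l - 1)).eval (Real.cos ξ)
    + am * (Polynomial.Chebyshev.U ℝ (l - 2)).eval (Real.cos ξ)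

/-- The complex amplitude `c(ξ) = (1-p₋e^{-iξ})(1-q₋e^{-iξ})/(1-e^{-2iξ})`. -/
noncomputable def cAmp (pm qm : ℝ) (ξ : ℝ) : ℂ :=
  (1 - (pm : ℂ) * Complex.exp (-Complex.I * ξ)) * (1 - (qm : ℂ) * Complex.exp (-Complex.I * ξ)) /
    (1 - Complex.exp (-2 * Complex.I * ξ))

/-- `H^{(m)}(ξ) = 2m + Σ_{q ∈ {p₋,q₋,p₊,q₊}} (1-q²)/(1-2q cos ξ + q²)`. -/
noncomputable def Hw (m : ℕ) (pm qm pp qp : ℝ) (ξ : ℝ) : ℝ :=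
  2*(m:ℝ) + (1 - pm^2) / (1 - 2*pm*Real.cos ξ + pm^2)
    + (1 - qm^2) / (1 - 2*qm*Real.cos ξ + qm^2)
    + (1 - pp^2) / (1 - 2*pp*Real.cos ξ + pp^2)
    + (1 - qp^2) / (1 - 2*qp*Real.cos ξ + qp^2)


/-! ### The phase functions -/

lemma one_sub_mul_cos_pos {q : ℝ} (h1 : -1 < q) (h2 : q < 1) (x : ℝ) :
    0 < 1 - q * Real.cos x := by
  have h : |q * Real.cos x| < 1 := by
    rw [abs_mul]
    calc |q| * |Real.cos x| ≤ |q| * 1 :=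
          mul_le_mul_of_nonneg_left (Real.abs_cos_le_one x) (abs_nonneg q)
      _ < 1 := by rw [mul_one, abs_lt]; exact ⟨h1, h2⟩
  linarith [(abs_lt.mp h).2]

lemma den_pos {q : ℝ} (h1 : -1 < q) (h2 : q < 1) (x : ℝ) :
    0 < 1 - 2*q*Real.cos x + q^2 := by
  have h := Real.sin_sq_add_cos_sq x
  have hp := one_sub_mul_cos_pos h1 h2 x
  nlinarith [mul_pos hp hp, mul_nonneg (sq_nonneg q) (sq_nonneg (Real.sin x))]

lemma hasDerivAt_closed {q : ℝ} (h1 : -1 < q) (h2 : q < 1) (x : ℝ) :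
    HasDerivAt (fun x => x + 2 * Real.arctan (q * Real.sin x / (1 - q * Real.cos x)))
      ((1 - q^2) / (1 - 2*q*Real.cos x + q^2)) x := by
  have hp := one_sub_mul_cos_pos h1 h2 x
  have hd := den_pos h1 h2 x
  have hs := Real.sin_sq_add_cos_sq x
  have h := (hasDerivAt_id x).add ((((Real.hasDerivAt_sin x).const_mul q).div
    (((Real.hasDerivAt_cos x).const_mul q).const_sub 1) hp.ne').arctan.const_mul 2)
  refine h.congr_deriv ?_
  have e : 1 + (q * Real.sin x / (1 - q * Real.cos x))^2
      = (1 - 2*q*Real.cos x + q^2) / (1 - q * Real.cos x)^2 := by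
    field_simp
    linear_combination q^2 * hs
  have e2 : q * Real.cos x * (1 - q * Real.cos x) - q * Real.sin x * -(q * -Real.sin x)
      = q * Real.cos x - q^2 := by
    linear_combination (-q^2) * hs
  rw [e2]
  change 1 + 2 * (1 / (1 + (q * Real.sin x / (1 - q * Real.cos x))^2) * _) = _
  rw [e]
  field_simp
  ring

/-- The phase function in closed form: `v_q(ξ) = ξ + 2 arg (1 - q e^{-iξ})`. -/
lemma v_eq {q : ℝ} (h1 : -1 < q) (h2 : q < 1) (x : ℝ) :
    v q x = x + 2 * Real.arctan (q * Real.sin x / (1 - q * Real.cos x)) := by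
  unfold v
  rw [intervalIntegral.integral_eq_sub_of_hasDerivAt (fun y _ => hasDerivAt_closed h1 h2 y)]
  · simp
  · apply Continuous.intervalIntegrable
    exact Continuous.div (by fun_prop) (by fun_prop) (fun y => (den_pos h1 h2 y).ne')

lemma v_zero (q : ℝ) : v q 0 = 0 := by simp [v]

lemma v_pi {q : ℝ} (h1 : -1 < q) (h2 : q < 1) : v q Real.pi = Real.pi := by
  simp [v_eq h1 h2]

lemma v_strictMono {q : ℝ} (h1 : -1 < q) (h2 : q < 1) : StrictMono (v q) := by
  have : v q = fun x => x + 2 * Real.arctan (q * Real.sin x / (1 - q * Real.cos x)) :=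
    funext (v_eq h1 h2)
  rw [this]
  apply strictMono_of_deriv_pos
  intro x
  rw [(hasDerivAt_closed h1 h2 x).deriv]
  exact div_pos (by nlinarith) (den_pos h1 h2 x)

lemma exp_ne (x : ℝ) {q : ℝ} (h1 : -1 < q) (h2 : q < 1) :
    1 - (q : ℂ) * Complex.exp (Complex.I * x) ≠ 0 ∧
      Complex.exp (Complex.I * x) - (q : ℂ) ≠ 0 := by
  have hz : ‖Complex.exp (Complex.I * x)‖ = 1 := by
    rw [mul_comm]; exact Complex.norm_exp_ofReal_mul_I x
  have hq : ‖(q : ℂ)‖ < 1 := by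
    rw [Complex.norm_real, Real.norm_eq_abs, abs_lt]; exact ⟨h1, h2⟩
  constructor
  · intro h
    have := congrArg norm (sub_eq_zero.mp h)
    rw [norm_mul, hz] at this
    simp at this
    simp at hq
    linarith
  · intro h
    have := congrArg norm (sub_eq_zero.mp h)
    rw [hz] at this
    linarith

lemma exp_eq (x : ℝ) :
    Complex.exp (Complex.I * x) = Real.cos x + Real.sin x * Complex.I := by
  rw [mul_comm, Complex.exp_mul_I]; simp

lemma exp_neg_eq (x : ℝ) :
    (Complex.exp (Complex.I * x))⁻¹ = Real.cos x - Real.sin x * Complex.I := by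
  rw [← Complex.exp_neg, show -(Complex.I * x) = Complex.I * ((-x : ℝ) : ℂ) by push_cast; ring,
    exp_eq]
  simp
  ring

/-- `e^{i v_q(ξ)} = (z - q) / (1 - q z)` with `z = e^{iξ}`. -/
lemma exp_v {q : ℝ} (h1 : -1 < q) (h2 : q < 1) (x : ℝ) :
    Complex.exp (Complex.I * v q x) * (1 - q * Complex.exp (Complex.I * x))
      = Complex.exp (Complex.I * x) - q := by
  have hp := one_sub_mul_cos_pos h1 h2 x
  set w := q * Real.sin x / (1 - q * Real.cos x) with hw
  have hc : Real.cos (Real.arctan w) ≠ 0 := (Real.cos_arctan_pos w).ne'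
  have hs : Real.sin (Real.arctan w) = Real.cos (Real.arctan w) * w := by
    have := Real.tan_arctan w
    rw [Real.tan_eq_sin_div_cos] at this
    field_simp at this
    linarith
  have e1 := exp_eq (Real.arctan w)
  have e2 := exp_neg_eq (Real.arctan w)
  rw [hs] at e1 e2
  have hE := Complex.exp_ne_zero (Complex.I * Real.arctan w)
  set E := Complex.exp (Complex.I * Real.arctan w) with hEd
  have hc' : ((Real.cos (Real.arctan w) : ℝ) : ℂ) ≠ 0 := by exact_mod_cast hc
  have hp' : (1 - (q : ℂ) * (Real.cos x : ℂ)) ≠ 0 := by exact_mod_cast hp.ne'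
  have hwc : (w : ℂ) * (1 - (q : ℂ) * (Real.cos x : ℂ)) = q * (Real.sin x : ℂ) := by
    have : w * (1 - q * Real.cos x) = q * Real.sin x := by rw [hw]; field_simp
    exact_mod_cast this
  have e3 : E * E * (1 - w * Complex.I) = 1 + w * Complex.I := by
    apply mul_left_cancel₀ hc'
    have a1 : E * E⁻¹ = 1 := mul_inv_cancel₀ hE
    rw [e2] at a1
    push_cast at a1 e1 ⊢
    linear_combination E * a1 + e1
  have hv : Complex.exp (Complex.I * v q x) = Complex.exp (Complex.I * x) * (E * E) := by
    rw [v_eq h1 h2, ← hw, hEd, ← Complex.exp_add, ← Complex.exp_add]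
    congr 1
    push_cast
    ring
  have hz := Complex.exp_ne_zero (Complex.I * x)
  have z1 := exp_eq x
  have z2 := exp_neg_eq x
  have a2 : Complex.exp (Complex.I * x) * (Complex.exp (Complex.I * x))⁻¹ = 1 :=
    mul_inv_cancel₀ hz
  rw [hv]
  set z := Complex.exp (Complex.I * x)
  have b1 : 1 - (q : ℂ) * z = (1 - w * Complex.I) * (1 - (q : ℂ) * (Real.cos x : ℂ)) := by
    linear_combination (-q) * z1 + Complex.I * hwc
  have b2 : z - q = z * ((1 + w * Complex.I) * (1 - (q : ℂ) * (Real.cos x : ℂ))) := by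
    linear_combination (q : ℂ) * a2 - z * q * z2 - z * Complex.I * hwc
  rw [b1, b2]
  linear_combination z * (1 - (q : ℂ) * (Real.cos x : ℂ)) * e3

/-! ### The polynomials: recurrence, Christoffel–Darboux, plane waves -/

lemma bs_rec (a b : ℝ) (n : ℤ) (x : ℝ) :
    bs a b (n + 2) x = 2 * Real.cos x * bs a b (n + 1) x - bs a b n x := by
  have h0 := Polynomial.Chebyshev.U_add_two ℝ n
  have h1 := Polynomial.Chebyshev.U_add_two ℝ (n - 1)
  have h2 := Polynomial.Chebyshev.U_add_two ℝ (n - 2)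
  unfold bs
  rw [show n + 2 - 1 = n - 1 + 2 by ring, show n + 2 - 2 = n - 2 + 2 by ring,
    show n + 1 - 1 = n - 1 + 1 by ring, show n + 1 - 2 = n - 2 + 1 by ring, h0, h1, h2]
  simp only [Polynomial.eval_sub, Polynomial.eval_mul, Polynomial.eval_X, Polynomial.eval_ofNat]
  ring

lemma bs_zero (a b x : ℝ) : bs a b 0 x = 1 - a := by
  simp [bs]; ring

lemma bs_one (a b x : ℝ) : bs a b 1 x = 2 * Real.cos x - b := by
  simp [bs]

/-- Christoffel–Darboux: the discrete Wronskian telescopes; the last term is the left boundary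
contribution `W_{-1}`. -/
lemma christoffel_darboux (a b x y : ℝ) (n : ℕ) :
    (2 * Real.cos x - 2 * Real.cos y) * ∑ l ∈ Finset.range (n + 1), bs a b l x * bs a b l y
      = bs a b (n + 1) x * bs a b n y - bs a b n x * bs a b (n + 1) y
        - a * (1 - a) * (2 * Real.cos x - 2 * Real.cos y) := by
  induction n with
  | zero => simp [bs_zero, bs_one]; ring
  | succ n ih =>
    rw [Finset.sum_range_succ, mul_add, ih]
    push_cast
    rw [show (n : ℤ) + 1 + 1 = n + 2 by ring, bs_rec, bs_rec]
    ring

/-- Plane wave decomposition `p_l(ξ) = c z^l + c' z^{-l}`, with `c = c(ξ)` and `c' = c(-ξ)`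
written as rational functions of `z = e^{iξ}`. -/
lemma bs_wave (p q x : ℝ) (z : ℂ) (hz : z = Complex.exp (Complex.I * x))
    (h : z^2 - 1 ≠ 0) (n : ℕ) :
    ((bs (p * q) (p + q) n x : ℝ) : ℂ) = (z - p) * (z - q) / (z^2 - 1) * z^n
        - (1 - p * z) * (1 - q * z) / (z^2 - 1) * (z^n)⁻¹ := by
  have hz0 : z ≠ 0 := hz ▸ Complex.exp_ne_zero _
  have hcos : (2 : ℂ) * (Real.cos x : ℂ) = z + z⁻¹ := by
    rw [hz, exp_neg_eq, exp_eq]; ring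
  induction n using Nat.twoStepInduction with
  | zero =>
    rw [Nat.cast_zero, bs_zero]
    push_cast
    field_simp
    ring
  | one =>
    rw [Nat.cast_one, bs_one]
    push_cast at hcos ⊢
    rw [hcos]
    field_simp
    ring
  | more n i1 i2 =>
    have := bs_rec (p * q) (p + q) n x
    push_cast at i2 ⊢
    rw [this]
    push_cast at hcos ⊢
    rw [hcos, i1, i2]
    have hw : z^n ≠ 0 := pow_ne_zero _ hz0
    simp only [pow_succ z n, pow_succ z (n+1)]
    generalize z^n = w at *
    field_simp
    ring

lemma sum_wave_sq (c d z : ℂ) (hz : z ≠ 0) (h : z^2 - 1 ≠ 0) (m : ℕ) :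
    ∑ l ∈ Finset.range (m + 1), (c * z^l - d * (z^l)⁻¹)^2
      = (c^2 * (z^(2*m) * z^2 - 1) + d^2 * (z^2 - (z^(2*m))⁻¹)) / (z^2 - 1)
        - 2 * (m + 1) * c * d := by
  induction m with
  | zero => simp; field_simp; ring
  | succ n ih =>
    rw [Finset.sum_range_succ, ih]
    have hw : z^n ≠ 0 := pow_ne_zero _ hz
    rw [show z^(2*n) = (z^n)^2 by ring, show z^(2*(n+1)) = (z^n)^2*z^2 by ring, pow_succ z n]
    push_cast
    generalize z^n = w at *
    field_simp
    ring

/-- The Poisson kernel as a rational function of `z = e^{iξ}`. -/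
lemma poisson_exp (q x : ℝ) (z : ℂ) (hz : z = Complex.exp (Complex.I * x)) :
    (((1 - q^2) / (1 - 2*q*Real.cos x + q^2) : ℝ) : ℂ)
      = (1 - q^2) * z / ((1 - q * z) * (z - q)) := by
  have hz0 : z ≠ 0 := hz ▸ Complex.exp_ne_zero _
  have hcos : (2 : ℂ) * (Real.cos x : ℂ) = z + z⁻¹ := by
    rw [hz, exp_neg_eq, exp_eq]; ring
  push_cast at hcos ⊢
  rw [show (1 : ℂ) - 2 * q * Complex.cos x + q^2 = (1 - q * z) * (z - q) / z by
    rw [show (2 : ℂ) * q * Complex.cos x = q * (2 * Complex.cos x) by ring, hcos]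
    field_simp
    ring]
  rw [div_div_eq_mul_div]

lemma cAmp_mul (p q x : ℝ) (z : ℂ) (hz : z = Complex.exp (Complex.I * x))
    (h : z^2 - 1 ≠ 0) :
    cAmp p q x * cAmp p q (-x) =
      -((z - p) * (z - q) / (z^2 - 1) * ((1 - p * z) * (1 - q * z) / (z^2 - 1))) := by
  have hz0 : z ≠ 0 := hz ▸ Complex.exp_ne_zero _
  unfold cAmp
  have e1 : Complex.exp (-Complex.I * x) = z⁻¹ := by
    rw [hz, ← Complex.exp_neg]; congr 1; ring
  have e2 : Complex.exp (-2 * Complex.I * x) = (z^2)⁻¹ := by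
    rw [hz, ← Complex.exp_nat_mul, ← Complex.exp_neg]; congr 1; push_cast; ring
  have e3 : Complex.exp (-Complex.I * ((-x : ℝ) : ℂ)) = z := by
    rw [hz]; congr 1; push_cast; ring
  have e4 : Complex.exp (-2 * Complex.I * ((-x : ℝ) : ℂ)) = z^2 := by
    rw [hz, ← Complex.exp_nat_mul]; congr 1; push_cast; ring
  have h' : 1 - z^2 ≠ 0 := fun h0 => h (by linear_combination -h0)
  rw [e1, e2, e3, e4]
  have : 1 - (z^2)⁻¹ = (z^2 - 1) / z^2 := by field_simp
  rw [this, show 1 - z^2 = -(z^2 - 1) by ring]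
  field_simp

/-! ### The equation satisfied by the nodes, and the norms -/

/-- Exponentiating the transcendental equation for `ξ` gives an algebraic (Bethe-type) equation
for `z = e^{iξ}`. -/
lemma bethe (m n : ℕ) (pm qm pp qp x : ℝ)
    (h1 : -1 < pm) (h1' : pm < 1) (h2 : -1 < qm) (h2' : qm < 1)
    (h3 : -1 < pp) (h3' : pp < 1) (h4 : -1 < qp) (h4' : qp < 1)
    (hx : 2*(m:ℝ)*x + v pm x + v qm x + v pp x + v qp x = 2*Real.pi*((n:ℝ) + 1))
    (z : ℂ) (hz : z = Complex.exp (Complex.I * x)) :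
    z^(2*m) * (((z - pm) * (z - qm)) * ((z - pp) * (z - qp)))
      = ((1 - pm * z) * (1 - qm * z)) * ((1 - pp * z) * (1 - qp * z)) := by
  have e1 := exp_v h1 h1' x
  have e2 := exp_v h2 h2' x
  have e3 := exp_v h3 h3' x
  have e4 := exp_v h4 h4' x
  rw [← hz] at e1 e2 e3 e4
  have e5 : z^(2*m) * Complex.exp (Complex.I * v pm x) * Complex.exp (Complex.I * v qm x)
      * Complex.exp (Complex.I * v pp x) * Complex.exp (Complex.I * v qp x) = 1 := by
    rw [hz, ← Complex.exp_nat_mul, ← Complex.exp_add, ← Complex.exp_add, ← Complex.exp_add,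
      ← Complex.exp_add]
    rw [show ((2*m : ℕ) : ℂ) * (Complex.I * x) + Complex.I * v pm x + Complex.I * v qm x
      + Complex.I * v pp x + Complex.I * v qp x
      = Complex.I * ((2*(m:ℝ)*x + v pm x + v qm x + v pp x + v qp x : ℝ) : ℂ) by
        push_cast; ring, hx]
    rw [Complex.exp_eq_one_iff]
    exact ⟨n + 1, by push_cast; ring⟩
  rw [← e1, ← e2, ← e3, ← e4]
  linear_combination
    ((1 - pm * z) * (1 - qm * z)) * ((1 - pp * z) * (1 - qp * z)) * e5

/-- The contribution of the left boundary to the normalization. -/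
lemma diag_left (p q z : ℂ) (h : z^2 - 1 ≠ 0)
    (hp : 1 - p * z ≠ 0) (hp' : z - p ≠ 0) (hq : 1 - q * z ≠ 0) (hq' : z - q ≠ 0)
    (c d : ℂ) (hc : c = (z - p) * (z - q) / (z^2 - 1))
    (hd : d = (1 - p * z) * (1 - q * z) / (z^2 - 1)) :
    (-c^2 + d^2 * z^2) / (z^2 - 1) - c * d + p * q * (1 - p * q)
      = -(c * d) * ((1 - p^2) * z / ((1 - p * z) * (z - p))
        + (1 - q^2) * z / ((1 - q * z) * (z - q))) := by
  subst hc hd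
  have hpz : 1 - z * p ≠ 0 := by rwa [mul_comm]
  have hqz : 1 - z * q ≠ 0 := by rwa [mul_comm]
  field_simp
  ring

/-- The contribution of the right boundary to the normalization, where `R = N / D` with
`N = (1 - p z)(1 - q z)` and `D = (z - p)(z - q)`. -/
lemma diag_right (p q z : ℂ) (h : z^2 - 1 ≠ 0) (ha : 1 - p * q ≠ 0)
    (hp : 1 - p * z ≠ 0) (hp' : z - p ≠ 0) (hq : 1 - q * z ≠ 0) (hq' : z - q ≠ 0)
    (R S : ℂ) (hR : R = (1 - p * z) * (1 - q * z) / ((z - p) * (z - q)))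
    (hS : S = (z - p) * (z - q) / ((1 - p * z) * (1 - q * z))) :
    (R * z^2 - S) / (z^2 - 1) - 1 + p * q / (1 - p * q) * (R + S - 2)
      = - ((1 - p^2) * z / ((1 - p * z) * (z - p))
        + (1 - q^2) * z / ((1 - q * z) * (z - q))) := by
  subst hR hS
  have hpz : 1 - z * p ≠ 0 := by rwa [mul_comm]
  have hqz : 1 - z * q ≠ 0 := by rwa [mul_comm]
  field_simp
  ring

/-- At a solution `ξ` of the transcendental equation: the weighted sum of squares is
`c(ξ) c(-ξ) H(ξ)` (with the weights split as in `weighted_sum`), `c(ξ) c(-ξ)` does not vanish, and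
the right boundary condition `p_{m+1} - b₊ p_m + a₊ p_{m-1} = 0` holds, where `p_{m-1}` is expressed
through the recurrence. -/
lemma diag (m n : ℕ) (pm qm pp qp x : ℝ)
    (h1 : -1 < pm) (h1' : pm < 1) (h2 : -1 < qm) (h2' : qm < 1)
    (h3 : -1 < pp) (h3' : pp < 1) (h4 : -1 < qp) (h4' : qp < 1)
    (hx : 2*(m:ℝ)*x + v pm x + v qm x + v pp x + v qp x = 2*Real.pi*((n:ℝ) + 1))
    (hsin : Real.sin x ≠ 0) (ham : 1 - pm * qm ≠ 0) (hap : 1 - pp * qp ≠ 0) :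
    ((∑ l ∈ Finset.range (m + 1), bs (pm * qm) (pm + qm) l x * bs (pm * qm) (pm + qm) l x
      + pm * qm / (1 - pm * qm) * (bs (pm * qm) (pm + qm) 0 x * bs (pm * qm) (pm + qm) 0 x)
      + pp * qp / (1 - pp * qp) * (bs (pm * qm) (pm + qm) m x * bs (pm * qm) (pm + qm) m x)
        : ℝ) : ℂ)
      = cAmp pm qm x * cAmp pm qm (-x) * ((Hw m pm qm pp qp x : ℝ) : ℂ) ∧
    cAmp pm qm x * cAmp pm qm (-x) ≠ 0 ∧
    (bs (pm * qm) (pm + qm) (m + 1) x - (pp + qp) * bs (pm * qm) (pm + qm) m x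
      + pp * qp * (2 * Real.cos x * bs (pm * qm) (pm + qm) m x
          - bs (pm * qm) (pm + qm) (m + 1) x) = 0) := by
  obtain ⟨z, hz⟩ : ∃ z, z = Complex.exp (Complex.I * x) := ⟨_, rfl⟩
  have hz0 : z ≠ 0 := hz ▸ Complex.exp_ne_zero _
  have hzc : z = Real.cos x + Real.sin x * Complex.I := hz.trans (exp_eq x)
  have hzi : z⁻¹ = Real.cos x - Real.sin x * Complex.I := by rw [hz]; exact exp_neg_eq x
  have hcos : (2 : ℂ) * (Real.cos x : ℂ) = z + z⁻¹ := by rw [hzi, hzc]; ring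
  have h : z^2 - 1 ≠ 0 := by
    intro h0
    have e : z - z⁻¹ = 0 := by
      field_simp
      simpa using h0
    rw [hzi] at e
    have e' : (2 * Complex.I) * (Real.sin x : ℂ) = 0 := by
      rw [hzc] at e
      linear_combination e
    have := (mul_eq_zero.mp e').resolve_left (by simp)
    exact hsin (by exact_mod_cast this)
  have hB := bethe m n pm qm pp qp x h1 h1' h2 h2' h3 h3' h4 h4' hx z hz
  have hW := bs_wave pm qm x z hz h
  obtain ⟨a1, b1⟩ := exp_ne x h1 h1'
  obtain ⟨a2, b2⟩ := exp_ne x h2 h2'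
  obtain ⟨a3, b3⟩ := exp_ne x h3 h3'
  obtain ⟨a4, b4⟩ := exp_ne x h4 h4'
  rw [← hz] at a1 a2 a3 a4 b1 b2 b3 b4
  have hm : (1 : ℂ) - pm * qm ≠ 0 := by exact_mod_cast ham
  have hp : (1 : ℂ) - pp * qp ≠ 0 := by exact_mod_cast hap
  have hL := diag_left pm qm z h a1 b1 a2 b2 _ _ rfl rfl
  have hR := diag_right pp qp z h hp a3 b3 a4 b4 _ _ rfl rfl
  have hc0 : (z - pm) * (z - qm) / (z^2 - 1) ≠ 0 := div_ne_zero (mul_ne_zero b1 b2) h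
  have hd0 : (1 - pm * z) * (1 - qm * z) / (z^2 - 1) ≠ 0 := div_ne_zero (mul_ne_zero a1 a2) h
  have hRS : (1 - pp * z) * (1 - qp * z) / ((z - pp) * (z - qp)) *
      ((z - pp) * (z - qp) / ((1 - pp * z) * (1 - qp * z))) = 1 :=
    (div_mul_div_cancel₀' (mul_ne_zero a3 a4) _ _).trans (div_self (mul_ne_zero b3 b4))
  have hZ0 : z^m ≠ 0 := pow_ne_zero _ hz0
  have hZ : (z - pm) * (z - qm) / (z^2 - 1) * z^(2*m)
      = (1 - pm * z) * (1 - qm * z) / (z^2 - 1)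
        * ((1 - pp * z) * (1 - qp * z) / ((z - pp) * (z - qp))) := by
    field_simp
    linear_combination hB
  refine ⟨?_, ?_, ?_⟩
  · rw [cAmp_mul pm qm x z hz h]
    unfold Hw
    simp only [Complex.ofReal_add]
    rw [poisson_exp pm x z hz, poisson_exp qm x z hz, poisson_exp pp x z hz, poisson_exp qp x z hz,
      Complex.ofReal_sum]
    simp only [← sq, Complex.ofReal_mul, Complex.ofReal_pow, hW]
    rw [sum_wave_sq _ _ z hz0 h, bs_zero]
    push_cast
    generalize (z - (pm:ℂ)) * (z - qm) / (z^2 - 1) = c at *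
    generalize (1 - (pm:ℂ) * z) * (1 - qm * z) / (z^2 - 1) = d at *
    generalize (1 - (pp:ℂ) * z) * (1 - qp * z) / ((z - pp) * (z - qp)) = R at *
    generalize (z - (pp:ℂ)) * (z - qp) / ((1 - pp * z) * (1 - qp * z)) = S at *
    -- The algebraic equation says `c² z^{2m} = c d R` and `d² z^{-2m} = c d S`, which removes `z^{2m}`.
    have c1 : c^2 * z^(2*m) = c * d * R := by linear_combination c * hZ
    have hS : d * (z^(2*m))⁻¹ = c * S := by
      rw [mul_inv_eq_iff_eq_mul₀ (pow_ne_zero _ hz0)]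
      linear_combination (-S) * hZ - d * hRS
    have c2 : d^2 * (z^(2*m))⁻¹ = c * d * S := by linear_combination d * hS
    have c3 : (c * z^m - d * (z^m)⁻¹)^2 = c * d * (R + S - 2) := by
      have : (c * z^m - d * (z^m)⁻¹)^2
          = c^2 * z^(2*m) + d^2 * (z^(2*m))⁻¹ - 2 * c * d * (z^m * (z^m)⁻¹) := by
        rw [show z^(2*m) = (z^m)^2 by ring, ← inv_pow]
        ring
      rw [this, mul_inv_cancel₀ hZ0, c1, c2]
      ring
    have c4 : (c^2 * (z^(2*m) * z^2 - 1) + d^2 * (z^2 - (z^(2*m))⁻¹))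
        = (-c^2 + d^2 * z^2) + c * d * (R * z^2 - S) := by
      linear_combination z^2 * c1 - c2
    have c5 : (pm:ℂ) * qm / (1 - pm * qm) * (1 - pm * qm)^2 = pm * qm * (1 - pm * qm) := by
      field_simp
    rw [c3, c4, add_div, mul_div_assoc, c5]
    linear_combination hL + c * d * hR
  · rw [cAmp_mul pm qm x z hz h]
    exact neg_ne_zero.mpr (mul_ne_zero hc0 hd0)
  · have w0 := hW m
    have w1 := hW (m + 1)
    push_cast at w1 hcos
    have : ((bs (pm * qm) (pm + qm) (m + 1) x - (pp + qp) * bs (pm * qm) (pm + qm) m x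
      + pp * qp * (2 * Real.cos x * bs (pm * qm) (pm + qm) m x
          - bs (pm * qm) (pm + qm) (m + 1) x) : ℝ) : ℂ) = 0 := by
      push_cast
      rw [w0, w1, hcos]
      generalize (z - (pm:ℂ)) * (z - qm) / (z^2 - 1) = c at *
      generalize (1 - (pm:ℂ) * z) * (1 - qm * z) / (z^2 - 1) = d at *
      have hZ' : c * z^(2*m) * ((z - pp) * (z - qp)) = d * ((1 - pp * z) * (1 - qp * z)) := by
        rw [hZ]; field_simp
      rw [show z^(2*m) = (z^m)^2 by ring] at hZ'
      rw [pow_succ]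
      generalize z^m = w at *
      field_simp
      linear_combination hZ'
    exact_mod_cast this

/-- Splitting the weights `Δ_l` into a uniform bulk and two end corrections; the ends differ
because `m ≥ 1`. -/
lemma weighted_sum (m : ℕ) (hm : 1 ≤ m) (a b : ℝ) (ha : 1 - a ≠ 0) (hb : 1 - b ≠ 0)
    (f : ℕ → ℝ) :
    ∑ l : Fin (m + 1), ((1 - a * (if (l : ℕ) = 0 then 1 else 0))⁻¹ *
            (1 - b * (if (l : ℕ) = m then 1 else 0))⁻¹) * f l
      = ∑ l ∈ Finset.range (m + 1), f l + a / (1 - a) * f 0 + b / (1 - b) * f m := by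
  rw [Fin.sum_univ_eq_sum_range (fun l => ((1 - a * (if l = 0 then 1 else 0))⁻¹ *
            (1 - b * (if l = m then 1 else 0))⁻¹) * f l)]
  have e : ∀ l : ℕ, ((1 - a * (if l = 0 then 1 else 0))⁻¹ *
            (1 - b * (if l = m then 1 else 0))⁻¹) * f l
      = f l + (if l = 0 then a / (1 - a) * f l else 0)
        + (if l = m then b / (1 - b) * f l else 0) := by
    intro l
    by_cases h0 : l = 0
    · have : l ≠ m := by omega
      simp only [h0, if_true]
      rw [if_neg (by omega), if_neg (by omega)]
      field_simp
      ring
    · by_cases h1 : l = m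
      · simp only [h1, if_true]
        rw [if_neg (by omega), if_neg (by omega)]
        field_simp
        ring
      · simp [h0, h1]
  simp only [e, Finset.sum_add_distrib, Finset.sum_ite_eq']
  simp

theorem stmt13 (m : ℕ) (hm : 1 ≤ m) (pm qm pp qp : ℝ)
    (h1 : -1 < pm) (h2 : pm ≤ qm) (h3 : qm < 1)
    (h4 : -1 < pp) (h5 : pp ≤ qp) (h6 : qp < 1)
    (am bm ap bp : ℝ) (ham : am = pm * qm) (hbm : bm = pm + qm)
    (hap : ap = pp * qp) (hbp : bp = pp + qp)
    (ξhat : Fin (m+1) → ℝ)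
    (hξ : ∀ lh : Fin (m+1),
      2*(m:ℝ)*(ξhat lh) + v pm (ξhat lh) + v qm (ξhat lh) + v pp (ξhat lh) + v qp (ξhat lh)
        = 2*Real.pi*(((lh : ℕ) : ℝ) + 1))
    (l k : Fin (m+1)) :
    ∑ lh : Fin (m+1),
      ((bs am bm ((l : ℕ) : ℤ) (ξhat lh) : ℝ) : ℂ) * ((bs am bm ((k : ℕ) : ℤ) (ξhat lh) : ℝ) : ℂ) *
        (cAmp pm qm (ξhat lh) * cAmp pm qm (-(ξhat lh)) *
          ((Hw m pm qm pp qp (ξhat lh) : ℝ) : ℂ))⁻¹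
    = if k = l then
        ((((1 - am * (if (l : ℕ) = 0 then 1 else 0))⁻¹ *
            (1 - ap * (if (l : ℕ) = m then 1 else 0))⁻¹)⁻¹ : ℝ) : ℂ)
      else 0 := by
  subst ham hbm hap hbp
  have h1' : pm < 1 := h2.trans_lt h3
  have h2' : -1 < qm := h1.trans_le h2
  have h4' : pp < 1 := h5.trans_lt h6
  have h5' : -1 < qp := h4.trans_le h5
  have hmul : ∀ {p q : ℝ}, -1 < p → p < 1 → -1 < q → q < 1 → 1 - p * q ≠ 0 := by
    intro p q a b c d
    have : |p * q| < 1 := by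
      rw [abs_mul]
      exact mul_lt_one_of_nonneg_of_lt_one_left (abs_nonneg _) (abs_lt.mpr ⟨a, b⟩)
        (abs_lt.mpr ⟨c, d⟩).le
    linarith [(abs_lt.mp this).2]
  have ham : 1 - pm * qm ≠ 0 := hmul h1 h1' h2' h3
  have hap : 1 - pp * qp ≠ 0 := hmul h4 h4' h5' h6
  set F : ℝ → ℝ := fun x => 2*(m:ℝ)*x + v pm x + v qm x + v pp x + v qp x with hF
  have hFmono : StrictMono F := by
    intro x y hxy
    have := v_strictMono h1 h1' hxy
    have := v_strictMono h2' h3 hxy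
    have := v_strictMono h4 h4' hxy
    have := v_strictMono h5' h6 hxy
    have : 2 * (m:ℝ) * x ≤ 2 * (m:ℝ) * y := mul_le_mul_of_nonneg_left hxy.le (by positivity)
    simp only [hF]
    linarith
  have hF0 : F 0 = 0 := by simp [hF, v_zero]
  have hFpi : F Real.pi = 2 * Real.pi * (m + 2) := by
    simp only [hF]
    rw [v_pi h1 h1', v_pi h2' h3, v_pi h4 h4', v_pi h5' h6]
    ring
  have hpi := Real.pi_pos
  have hpos : ∀ j, 0 < ξhat j := by
    intro j
    rw [← hFmono.lt_iff_lt, hF0]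
    exact (by positivity : 0 < 2*Real.pi*(((j : ℕ) : ℝ) + 1)).trans_eq (hξ j).symm
  have hlt : ∀ j, ξhat j < Real.pi := by
    intro j
    rw [← hFmono.lt_iff_lt, hFpi]
    refine (hξ j).trans_lt ?_
    have : ((j : ℕ) : ℝ) ≤ m := by exact_mod_cast Nat.le_of_lt_succ j.2
    exact mul_lt_mul_of_pos_left (by linarith) (by positivity)
  have hcosne : ∀ i j, i ≠ j → 2 * Real.cos (ξhat i) - 2 * Real.cos (ξhat j) ≠ 0 := by
    intro i j hij h0
    have e : ξhat i = ξhat j := Real.injOn_cos ⟨(hpos i).le, (hlt i).le⟩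
      ⟨(hpos j).le, (hlt j).le⟩ (by linarith)
    have e2 := hξ i
    rw [e, hξ j] at e2
    have e3 := mul_left_cancel₀ (by positivity) e2
    have e4 : ((j : ℕ) : ℝ) = ((i : ℕ) : ℝ) := by linarith
    exact hij (Fin.ext (by exact_mod_cast e4.symm))
  have hD := fun j : Fin (m+1) => diag m j pm qm pp qp (ξhat j) h1 h1' h2' h3 h4 h4' h5' h6 (hξ j)
    (Real.sin_pos_of_pos_of_lt_pi (hpos j) (hlt j)).ne' ham hap
  have hH : ∀ j, Hw m pm qm pp qp (ξhat j) ≠ 0 := by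
    intro j
    have g : ∀ {q : ℝ}, -1 < q → q < 1 →
        0 < (1 - q^2) / (1 - 2*q*Real.cos (ξhat j) + q^2) :=
      fun a b => div_pos (by nlinarith) (den_pos a b _)
    have := g h1 h1'
    have := g h2' h3
    have := g h4 h4'
    have := g h5' h6
    unfold Hw
    positivity
  set Δ : Fin (m+1) → ℝ := fun l => (1 - pm * qm * (if (l : ℕ) = 0 then 1 else 0))⁻¹ *
            (1 - pp * qp * (if (l : ℕ) = m then 1 else 0))⁻¹ with hΔ
  set K : Fin (m+1) → ℂ := fun j => cAmp pm qm (ξhat j) * cAmp pm qm (-(ξhat j)) *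
          ((Hw m pm qm pp qp (ξhat j) : ℝ) : ℂ) with hK
  have hK0 : ∀ j, K j ≠ 0 := fun j =>
    mul_ne_zero (hD j).2.1 (Complex.ofReal_ne_zero.mpr (hH j))
  have hΔ0 : ∀ l, Δ l ≠ 0 := by
    intro l
    simp only [hΔ]
    refine mul_ne_zero (inv_ne_zero ?_) (inv_ne_zero ?_)
    · split_ifs <;> simp [ham]
    · split_ifs <;> simp [hap]
  -- Dual orthogonality: the rows of the matrix `p_l(ξ_j)` are orthogonal for the weights `Δ_l`.
  have hdual : ∀ i j, ((∑ l : Fin (m+1), Δ l * (bs (pm * qm) (pm + qm) ((l : ℕ) : ℤ) (ξhat i)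
      * bs (pm * qm) (pm + qm) ((l : ℕ) : ℤ) (ξhat j)) : ℝ) : ℂ) = if i = j then K j else 0 := by
    intro i j
    simp only [hΔ]
    rw [weighted_sum m hm _ _ ham hap (fun l => bs (pm * qm) (pm + qm) (l : ℤ) (ξhat i)
      * bs (pm * qm) (pm + qm) (l : ℤ) (ξhat j))]
    split_ifs with hij
    · subst hij
      exact_mod_cast (hD i).1
    · rw [Complex.ofReal_eq_zero]
      apply mul_left_cancel₀ (hcosne i j hij)
      have cd := christoffel_darboux (pm * qm) (pm + qm) (ξhat i) (ξhat j) m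
      have bi := (hD i).2.2
      have bj := (hD j).2.2
      rw [mul_add, mul_add, cd, Nat.cast_zero, bs_zero, bs_zero]
      field_simp
      linear_combination bs (pm * qm) (pm + qm) m (ξhat j) * bi
        - bs (pm * qm) (pm + qm) m (ξhat i) * bj
  -- In matrix form this says `A * B = 1`; for square matrices `B * A = 1` follows.
  let A : Matrix (Fin (m+1)) (Fin (m+1)) ℂ := fun j l =>
    ((bs (pm * qm) (pm + qm) ((l : ℕ) : ℤ) (ξhat j) : ℝ) : ℂ) * (Δ l : ℂ)
  let B : Matrix (Fin (m+1)) (Fin (m+1)) ℂ := fun l j =>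
    ((bs (pm * qm) (pm + qm) ((l : ℕ) : ℤ) (ξhat j) : ℝ) : ℂ) * (K j)⁻¹
  have hAB : A * B = 1 := by
    ext i j
    rw [Matrix.mul_apply, Matrix.one_apply]
    have := congrArg (· * (K j)⁻¹) (hdual i j)
    simp only [Complex.ofReal_sum, Complex.ofReal_mul, Finset.sum_mul] at this
    refine Eq.trans (Finset.sum_congr rfl fun l _ => ?_) (this.trans ?_)
    · simp only [A, B]; ring
    · split_ifs
      · exact mul_inv_cancel₀ (hK0 j)
      · exact zero_mul _
  have hBA' : B * A = 1 := mul_eq_one_comm.mp hAB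
  have hBA := congrFun (congrFun hBA' l) k
  rw [Matrix.mul_apply, Matrix.one_apply] at hBA
  have hΔk : (Δ k : ℂ) ≠ 0 := Complex.ofReal_ne_zero.mpr (hΔ0 k)
  have key : (∑ j, ((bs (pm * qm) (pm + qm) ((l : ℕ) : ℤ) (ξhat j) : ℝ) : ℂ)
      * ((bs (pm * qm) (pm + qm) ((k : ℕ) : ℤ) (ξhat j) : ℝ) : ℂ) * (K j)⁻¹) * (Δ k : ℂ)
      = if l = k then 1 else 0 := by
    rw [← hBA, Finset.sum_mul]
    refine Finset.sum_congr rfl fun j _ => ?_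
    simp only [A, B]
    ring
  apply mul_right_cancel₀ hΔk
  refine key.trans ?_
  by_cases hlk : k = l
  · subst hlk
    rw [if_pos rfl, if_pos rfl]
    change _ = (((Δ k)⁻¹ : ℝ) : ℂ) * _
    rw [Complex.ofReal_inv, inv_mul_cancel₀ hΔk]
  · rw [if_neg hlk, if_neg (fun h => hlk h.symm), zero_mul]
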